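/- For all positive integers x, y, z, m, n with x > y and 1 ≤ z ≤ x − y, if φ(z·(x^m − y^m)/(x − y)) = z·(x^n − y^n)/(x − y), then z = 1, m = 1 and n = 1. -/

import Mathlib

/-!
A solution with `m = n` has `φ N = N`, so `N = 1`. Suppose instead that `n < m = n + k`, and write
`x = D a`, `y = D b` with `a` and `b` coprime. Then `N / φ N > (D a) ^ k`, so the sum of
`log (p / (p - 1))` over the primes `p ∣ N` exceeds `log ((D a) ^ k)`. Call a prime `q` excess if it
has a larger exponent in `m` than in `n`. A prime divisor `p` of `N` either is `1` modulo an excess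
prime, or divides the comparatively small number `z D (a ^ k - b ^ k) / (a - b)`: in the latter
case, unless `p ∣ z D`, the order of `a / b` modulo `p` (or `p` itself, if `p ∣ a - b`) divides `m`,
hence `n`, hence `k`. Comparing the exponents of `q` in `N` and in `φ N` shows that few prime
divisors of `N` are `1` modulo `q`, whereas primitive prime divisors of `a ^ d - b ^ d` for
squarefree `d ∣ m` produce many such primes as soon as there are many excess primes. So there are
few excess primes, each contributing little to the sum, and the divisors of the small number cannot
make up for the difference.
-/

open Finset

section LogSums

lemma sum_le_sum_add_sum_sum {ι κ M : Type*} [AddCommMonoid M] [PartialOrder M]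
    [IsOrderedAddMonoid M] {f : ι → M} (hf : ∀ i, 0 ≤ f i)
    {s A : Finset ι} {Q : Finset κ} {R : κ → Finset ι}
    (hs : ∀ i ∈ s, i ∈ A ∨ ∃ j ∈ Q, i ∈ R j) :
    ∑ i ∈ s, f i ≤ ∑ i ∈ A, f i + ∑ j ∈ Q, ∑ i ∈ R j, f i := by
  classical
  have hsub : s ⊆ A ∪ Q.biUnion R := fun i hi ↦ mem_union.2 ((hs i hi).imp_right mem_biUnion.2)
  have hunion (B C : Finset ι) : ∑ i ∈ B ∪ C, f i ≤ ∑ i ∈ B, f i + ∑ i ∈ C, f i := by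
    rw [← sum_union_inter]
    exact le_add_of_nonneg_right (sum_nonneg fun i _ ↦ hf i)
  have hbiUnion : ∑ i ∈ Q.biUnion R, f i ≤ ∑ j ∈ Q, ∑ i ∈ R j, f i := by
    clear hs hsub
    induction Q using Finset.induction_on with
    | empty => simp
    | insert j Q hj ih =>
      rw [biUnion_insert, sum_insert hj]
      exact (hunion _ _).trans (by gcongr)
  calc ∑ i ∈ s, f i ≤ ∑ i ∈ A ∪ Q.biUnion R, f i :=
        sum_le_sum_of_subset_of_nonneg hsub fun i _ _ ↦ hf i
    _ ≤ ∑ i ∈ A, f i + ∑ i ∈ Q.biUnion R, f i := hunion _ _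
    _ ≤ _ := by gcongr

lemma card_add_le_of_forall_mem {s : Finset ℕ} {c a : ℕ} (hca : c ≤ a)
    (hs : ∀ t ∈ s, c ≤ t ∧ t < a) : #s + c ≤ a := by
  have hcard : #s ≤ #(Ico c a) := card_le_card fun t ht ↦ mem_Ico.2 (hs t ht)
  rw [Nat.card_Ico] at hcard
  omega

lemma factorial_card_succ_le_prod {S : Finset ℕ} (hS : ∀ t ∈ S, 1 < t) :
    (#S + 1).factorial ≤ ∏ t ∈ S, t := by
  induction S using Finset.induction_on_max with
  | empty => simp
  | insert a s has ih =>
    rw [forall_mem_insert] at hS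
    have ha : a ∉ s := fun h ↦ (has a h).false
    have hcard : #s + 2 ≤ a := card_add_le_of_forall_mem hS.1 fun t ht ↦ ⟨hS.2 t ht, has t ht⟩
    rw [prod_insert ha, card_insert_of_notMem ha, Nat.factorial_succ]
    exact Nat.mul_le_mul hcard (ih hS.2)

/- The sum is largest for `S = {1, …, #S}`, where it telescopes. -/
lemma sum_log_one_add_inv_le {S : Finset ℕ} (hS : ∀ t ∈ S, 0 < t) :
    ∑ t ∈ S, Real.log (1 + 1 / (t : ℝ)) ≤ Real.log (#S + 1) := by
  induction S using Finset.induction_on_max with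
  | empty => simp
  | insert a s has ih =>
    rw [forall_mem_insert] at hS
    have ha : a ∉ s := fun h ↦ (has a h).false
    have hcard : ((#s : ℝ) + 1) ≤ a := mod_cast
      card_add_le_of_forall_mem hS.1 fun t ht ↦ ⟨hS.2 t ht, has t ht⟩
    rw [sum_insert ha, card_insert_of_notMem ha]
    calc Real.log (1 + 1 / (a : ℝ)) + ∑ t ∈ s, Real.log (1 + 1 / (t : ℝ))
        ≤ Real.log (1 + 1 / ((#s : ℝ) + 1)) + Real.log (#s + 1) := by
          gcongr
          exact ih hS.2
      _ = Real.log (((#s + 1 : ℕ) : ℝ) + 1) := by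
          rw [← Real.log_mul (by positivity) (by positivity)]
          congr 1
          push_cast
          field_simp

lemma sum_log_div_sub_one_le {S : Finset ℕ} (hS : ∀ p ∈ S, 1 < p) :
    ∑ p ∈ S, Real.log ((p : ℝ) / ((p : ℝ) - 1)) ≤ Real.log (#S + 1) := by
  have hinj : Set.InjOn (fun p ↦ p - 1) (S : Set ℕ) := fun p hp p' hp' h ↦ by
    have := hS p hp
    have := hS p' hp'
    simp only at h
    omega
  have hsum := sum_log_one_add_inv_le (S := S.image (· - 1)) <| by
    simp only [forall_mem_image]
    exact fun p hp ↦ Nat.sub_pos_of_lt (hS p hp)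
  rw [sum_image hinj, card_image_of_injOn hinj] at hsum
  refine le_of_eq_of_le (sum_congr rfl fun p hp ↦ ?_) hsum
  have hp1 : (1 : ℝ) < p := mod_cast hS p hp
  rw [Nat.cast_pred (by have := hS p hp; omega), one_add_div (by linarith)]
  ring_nf

lemma two_thirds_inv_le_log_one_add_inv {t : ℕ} (ht : 0 < t) :
    2 / 3 * (1 / (t : ℝ)) ≤ Real.log (1 + 1 / (t : ℝ)) := by
  have ht1 : (1 : ℝ) ≤ t := mod_cast ht
  have hinv : 1 / (t : ℝ) ≤ 1 := (div_le_one (by linarith)).2 ht1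
  have hinv0 : 0 ≤ 1 / (t : ℝ) := by positivity
  refine le_trans ?_ (Real.le_log_one_add_of_nonneg hinv0)
  rw [le_div_iff₀ (by linarith)]
  nlinarith

lemma log_div_sub_one_le {c t : ℕ} (hc : 0 < c) (ht : 0 < t) :
    Real.log ((1 + c * t : ℝ) / (1 + c * t - 1)) ≤ 3 / (2 * c) * Real.log (1 + 1 / (t : ℝ)) := by
  have : (0 : ℝ) < c := mod_cast hc
  have : (0 : ℝ) < t := mod_cast ht
  calc Real.log ((1 + c * t : ℝ) / (1 + c * t - 1))
      ≤ (1 + c * t : ℝ) / (1 + c * t - 1) - 1 :=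
        Real.log_le_sub_one_of_pos (by rw [add_sub_cancel_left]; positivity)
    _ = 3 / (2 * c) * (2 / 3 * (1 / (t : ℝ))) := by
        rw [add_sub_cancel_left]
        field_simp
        ring
    _ ≤ _ := by
        gcongr
        exact two_thirds_inv_le_log_one_add_inv ht

lemma sum_log_div_sub_one_le_of_dvd {c : ℕ} {S : Finset ℕ} (hc : 0 < c) (hS : ∀ p ∈ S, 1 < p)
    (hdvd : ∀ p ∈ S, c ∣ p - 1) :
    ∑ p ∈ S, Real.log ((p : ℝ) / ((p : ℝ) - 1)) ≤ 3 / (2 * c) * Real.log (#S + 1) := by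
  have hinj : Set.InjOn (fun p ↦ (p - 1) / c) (S : Set ℕ) := fun p hp p' hp' h ↦ by
    have := (Nat.div_left_inj (hdvd p hp) (hdvd p' hp')).1 h
    have := hS p hp
    have := hS p' hp'
    omega
  have hpos : ∀ p ∈ S, 0 < (p - 1) / c := fun p hp ↦
    Nat.div_pos (Nat.le_of_dvd (Nat.sub_pos_of_lt (hS p hp)) (hdvd p hp)) hc
  have hsum := sum_log_one_add_inv_le (S := S.image fun p ↦ (p - 1) / c) <| by
    simpa only [forall_mem_image] using hpos
  rw [sum_image hinj, card_image_of_injOn hinj] at hsum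
  refine le_trans ?_ (mul_le_mul_of_nonneg_left hsum (by positivity))
  rw [mul_sum]
  refine sum_le_sum fun p hp ↦ ?_
  have hp_eq : (p : ℝ) = 1 + c * ((p - 1) / c : ℕ) := by
    have := hS p hp
    rw [← Nat.cast_mul, Nat.mul_div_cancel' (hdvd p hp), Nat.cast_pred (by omega)]
    ring
  conv_lhs => rw [hp_eq]
  exact log_div_sub_one_le hc (hpos p hp)

lemma log_div_sub_one_nonneg (p : ℕ) : 0 ≤ Real.log ((p : ℝ) / ((p : ℝ) - 1)) := by
  rcases p with _ | _ | t
  · simp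
  · simp
  · refine Real.log_nonneg ((one_le_div ?_).2 ?_) <;> push_cast <;> linarith

end LogSums

section Totient

/-- The prime divisors of `N` that are congruent to `1` modulo `q`. -/
def primeFactorsOneMod (q N : ℕ) : Finset ℕ := {p ∈ N.primeFactors | q ∣ p - 1}

lemma mem_primeFactorsOneMod {q N p : ℕ} :
    p ∈ primeFactorsOneMod q N ↔ p ∈ N.primeFactors ∧ q ∣ p - 1 := by
  simp only [primeFactorsOneMod, mem_filter]

lemma one_lt_of_mem_primeFactors {p N : ℕ} (hp : p ∈ N.primeFactors) : 1 < p :=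
  (Nat.prime_of_mem_primeFactors hp).one_lt

lemma card_primeFactors_le (N : ℕ) :
    #N.primeFactors ≤ #(primeFactorsOneMod 2 N) + if 2 ∣ N then 1 else 0 := by
  have hsub : N.primeFactors ⊆ primeFactorsOneMod 2 N ∪ if 2 ∣ N then {2} else ∅ := fun p hp ↦ by
    rcases (Nat.prime_of_mem_primeFactors hp).eq_two_or_odd with rfl | hodd
    · simp [Nat.dvd_of_mem_primeFactors hp]
    · exact mem_union_left _ (mem_primeFactorsOneMod.2 ⟨hp, by omega⟩)
  refine (card_le_card hsub).trans ((card_union_le _ _).trans ?_)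
  split_ifs <;> simp

lemma squarefree_prod_primeFactors (N : ℕ) : Squarefree (∏ p ∈ N.primeFactors, p) := by
  refine squarefree_prod_of_pairwise_isCoprime (fun p hp p' hp' hne ↦ ?_)
    fun p hp ↦ (Nat.prime_of_mem_primeFactors hp).squarefree
  exact Nat.coprime_iff_isRelPrime.1 <| (Nat.coprime_primes (Nat.prime_of_mem_primeFactors hp)
    (Nat.prime_of_mem_primeFactors hp')).2 hne

lemma padicValNat_prod_primeFactors_le {q : ℕ} (hq : q.Prime) (N : ℕ) :
    padicValNat q (∏ p ∈ N.primeFactors, p) ≤ if q ∣ N then 1 else 0 := by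
  split_ifs with hqN
  · rw [← Nat.factorization_def _ hq]
    exact (squarefree_prod_primeFactors N).natFactorization_le_one q
  · rw [padicValNat.eq_zero_of_not_dvd fun h ↦ hqN (h.trans (Nat.prod_primeFactors_dvd N))]

lemma padicValNat_add_card_primeFactorsOneMod_le {q N : ℕ} (hq : q.Prime) (hN : N ≠ 0) :
    padicValNat q N + #(primeFactorsOneMod q N) ≤
      padicValNat q N.totient + if q ∣ N then 1 else 0 := by
  have : Fact q.Prime := ⟨hq⟩
  have hprod : ∏ p ∈ N.primeFactors, p ≠ 0 :=
    prod_ne_zero_iff.2 fun p hp ↦ (Nat.prime_of_mem_primeFactors hp).ne_zero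
  have hprod_sub : ∏ p ∈ N.primeFactors, (p - 1) ≠ 0 :=
    prod_ne_zero_iff.2 fun p hp ↦ (Nat.sub_pos_of_lt (one_lt_of_mem_primeFactors hp)).ne'
  have hval := congrArg (padicValNat q) (Nat.totient_mul_prod_primeFactors N)
  rw [padicValNat.mul (by simpa using hN) hprod, padicValNat.mul hN hprod_sub] at hval
  have hcard : #(primeFactorsOneMod q N) ≤ padicValNat q (∏ p ∈ N.primeFactors, (p - 1)) := by
    rw [← padicValNat_dvd_iff_le hprod_sub, ← prod_const]
    exact (prod_dvd_prod_of_dvd _ _ fun p hp ↦ (mem_primeFactorsOneMod.1 hp).2).trans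
      (prod_dvd_prod_of_subset _ _ _ (filter_subset _ _))
  have := padicValNat_prod_primeFactors_le hq N
  omega

lemma log_div_totient {N : ℕ} (hN : N ≠ 0) :
    Real.log ((N : ℝ) / N.totient) = ∑ p ∈ N.primeFactors, Real.log ((p : ℝ) / ((p : ℝ) - 1)) := by
  have hsub : ∀ p ∈ N.primeFactors, (0 : ℝ) < (p : ℝ) - 1 := fun p hp ↦
    sub_pos.2 (mod_cast one_lt_of_mem_primeFactors hp)
  have htot : (0 : ℝ) < N.totient := mod_cast Nat.totient_pos.2 (Nat.pos_of_ne_zero hN)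
  have hmul : (N.totient : ℝ) * ∏ p ∈ N.primeFactors, (p : ℝ) =
      N * ∏ p ∈ N.primeFactors, ((p : ℝ) - 1) := by
    have hcast : ∏ p ∈ N.primeFactors, ((p : ℝ) - 1) = (∏ p ∈ N.primeFactors, (p - 1) : ℕ) := by
      rw [Nat.cast_prod]
      exact prod_congr rfl fun p hp ↦ (Nat.cast_pred (Nat.pos_of_mem_primeFactors hp)).symm
    rw [hcast, ← Nat.cast_prod, ← Nat.cast_mul, ← Nat.cast_mul, Nat.totient_mul_prod_primeFactors]
  rw [← Real.log_prod fun p hp ↦ (div_pos (by linarith [hsub p hp]) (hsub p hp)).ne',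
    prod_div_distrib, (div_eq_div_iff htot.ne' (prod_pos hsub).ne').2]
  linarith

lemma factorial_card_primeFactors_succ_le {N : ℕ} (hN : N ≠ 0) :
    (#N.primeFactors + 1).factorial ≤ N :=
  (factorial_card_succ_le_prod fun _ hp ↦ one_lt_of_mem_primeFactors hp).trans <|
    Nat.le_of_dvd (Nat.pos_of_ne_zero hN) (Nat.prod_primeFactors_dvd N)

end Totient

section PrimitivePrimeDivisor

/-- `p` is a primitive prime divisor of `a ^ d - b ^ d`: it is prime, it divides `a ^ d - b ^ d`,
and it divides `a ^ e - b ^ e` only when `d ∣ e`. Stated as a congruence so that subtraction on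
`ℕ` is not involved. -/
def IsPrimitivePrimeDivisor (p a b d : ℕ) : Prop :=
  p.Prime ∧ ∀ e, a ^ e ≡ b ^ e [MOD p] ↔ d ∣ e

variable {p a b d e r : ℕ}

lemma pow_modEq_pow_iff_intCast_dvd :
    a ^ e ≡ b ^ e [MOD p] ↔ (p : ℤ) ∣ (a : ℤ) ^ e - (b : ℤ) ^ e := by
  rw [Nat.ModEq.comm, Nat.modEq_iff_dvd]
  push_cast
  rfl

lemma not_dvd_of_pow_modEq_pow (hab : a.Coprime b) (hp : p.Prime) (he : e ≠ 0)
    (h : a ^ e ≡ b ^ e [MOD p]) : ¬ p ∣ a ∧ ¬ p ∣ b := by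
  have hiff : p ∣ a ↔ p ∣ b := by
    rw [← hp.prime.dvd_pow_iff_dvd he, ← hp.prime.dvd_pow_iff_dvd (a := b) he]
    exact h.dvd_iff dvd_rfl
  have hnot : ¬ (p ∣ a ∧ p ∣ b) := fun ⟨hpa, hpb⟩ ↦
    Nat.not_coprime_of_dvd_of_dvd hp.one_lt hpa hpb hab
  tauto

lemma exists_dvd_sub_one_forall_pow_modEq_pow_iff (hp : p.Prime) (ha : ¬ p ∣ a) (hb : ¬ p ∣ b) :
    ∃ o, o ∣ p - 1 ∧ ∀ e, a ^ e ≡ b ^ e [MOD p] ↔ o ∣ e := by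
  have : Fact p.Prime := ⟨hp⟩
  have ha' : (a : ZMod p) ≠ 0 := by rwa [Ne, ZMod.natCast_eq_zero_iff]
  have hb' : (b : ZMod p) ≠ 0 := by rwa [Ne, ZMod.natCast_eq_zero_iff]
  refine ⟨orderOf ((a : ZMod p) / b), ?_, fun e ↦ ?_⟩
  · exact orderOf_dvd_of_pow_eq_one (ZMod.pow_card_sub_one_eq_one (div_ne_zero ha' hb'))
  · rw [orderOf_dvd_iff_pow_eq_one, div_pow, div_eq_one_iff_eq (pow_ne_zero _ hb'),
      ← ZMod.natCast_eq_natCast_iff]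
    push_cast
    rfl

lemma IsPrimitivePrimeDivisor.dvd_sub_one (h : IsPrimitivePrimeDivisor p a b d)
    (hab : a.Coprime b) (hd : d ≠ 0) : d ∣ p - 1 := by
  obtain ⟨ha, hb⟩ := not_dvd_of_pow_modEq_pow hab h.1 hd ((h.2 d).2 dvd_rfl)
  obtain ⟨o, ho, hmod⟩ := exists_dvd_sub_one_forall_pow_modEq_pow_iff h.1 ha hb
  exact ((h.2 o).1 ((hmod o).2 dvd_rfl)).trans ho

lemma IsPrimitivePrimeDivisor.eq_of_eq {d' : ℕ} (h : IsPrimitivePrimeDivisor p a b d)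
    (h' : IsPrimitivePrimeDivisor p a b d') : d = d' :=
  Nat.dvd_antisymm ((h.2 d').1 ((h'.2 d').2 dvd_rfl)) ((h'.2 d).1 ((h.2 d).2 dvd_rfl))

open Polynomial

lemma scaleRoots_X_pow_sub_one {R : Type*} [CommRing R] [Nontrivial R] (s : R) {n : ℕ}
    (hn : n ≠ 0) : scaleRoots (X ^ n - 1 : R[X]) s = X ^ n - C (s ^ n) := by
  ext i
  have hdeg : (X ^ n - 1 : R[X]).natDegree = n := by
    simpa only [C_1] using natDegree_X_pow_sub_C (R := R) (n := n) (r := 1)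
  rw [coeff_scaleRoots, hdeg]
  simp only [coeff_sub, coeff_X_pow, coeff_one, coeff_C]
  rcases eq_or_ne i n with rfl | hi
  · simp [hn]
  · rcases eq_or_ne i 0 with rfl | hi0
    · simp [hn.symm]
    · simp [hi, hi0]

/-- The homogenized cyclotomic polynomial `b ^ φ(d) * Φ_d(a / b)`, whose prime divisors are
essentially the primitive prime divisors of `a ^ d - b ^ d`. -/
noncomputable def homCyclotomic (a b : ℤ) (d : ℕ) : ℤ := (scaleRoots (cyclotomic d ℤ) b).eval a

lemma homCyclotomic_mul_dvd_pow_sub_pow (a b : ℤ) (he : e ∈ d.properDivisors) :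
    (a ^ e - b ^ e) * homCyclotomic a b d ∣ a ^ d - b ^ d := by
  have he0 : e ≠ 0 := (Nat.pos_of_mem_properDivisors he).ne'
  have hd0 : d ≠ 0 := Nat.ne_zero_of_lt (Nat.mem_properDivisors.1 he).2
  have hdvd := eval_dvd (x := a) <| scaleRoots_dvd _ _ (r := b) <|
    X_pow_sub_one_mul_cyclotomic_dvd_X_pow_sub_one_of_dvd ℤ he
  rw [mul_scaleRoots_of_noZeroDivisors, scaleRoots_X_pow_sub_one b he0,
    scaleRoots_X_pow_sub_one b hd0, eval_mul] at hdvd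
  simpa only [homCyclotomic, eval_sub, eval_pow, eval_X, eval_C] using hdvd

lemma homCyclotomic_eq_pow_mul_eval_div (a : ℤ) {b : ℤ} (hb : b ≠ 0) (d : ℕ) :
    (homCyclotomic a b d : ℝ) = (b : ℝ) ^ d.totient * (cyclotomic d ℝ).eval ((a : ℝ) / b) := by
  have hb' : (b : ℝ) ≠ 0 := mod_cast hb
  have hscale :=
    scaleRoots_eval₂_mul (p := cyclotomic d ℤ) (Int.castRingHom ℝ) ((a : ℝ) / b) b
  rw [natDegree_cyclotomic, ← eval_map _ ((a : ℝ) / b), map_cyclotomic, eq_intCast,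
    mul_div_cancel₀ _ hb', ← eq_intCast (Int.castRingHom ℝ) a, eval₂_at_apply] at hscale
  simpa only [homCyclotomic, eq_intCast] using hscale

lemma two_pow_totient_lt_homCyclotomic {a b : ℤ} (hb : 0 < b) (hab : b + 2 ≤ a) (hd : 1 < d) :
    2 ^ d.totient < homCyclotomic a b d := by
  have hb' : (0 : ℝ) < b := mod_cast hb
  have hab' : (b : ℝ) + 2 ≤ a := mod_cast hab
  have hquot : 1 < (a : ℝ) / b := (one_lt_div hb').2 (by linarith)
  suffices (2 : ℝ) ^ d.totient < homCyclotomic a b d from mod_cast this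
  calc (2 : ℝ) ^ d.totient ≤ (b * ((a : ℝ) / b - 1)) ^ d.totient := by
        rw [mul_sub, mul_div_cancel₀ _ hb'.ne']
        gcongr
        linarith
    _ = (b : ℝ) ^ d.totient * ((a : ℝ) / b - 1) ^ d.totient := mul_pow _ _ _
    _ < (b : ℝ) ^ d.totient * (cyclotomic d ℝ).eval ((a : ℝ) / b) := by
        gcongr
        exact sub_one_pow_totient_lt_cyclotomic_eval hd hquot
    _ = homCyclotomic a b d := (homCyclotomic_eq_pow_mul_eval_div a hb.ne' d).symm

lemma homCyclotomic_dvd_geom_sum {a b : ℤ} (he : e ≠ 0) (hr : 1 < r) (hab : a ^ e ≠ b ^ e) :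
    homCyclotomic a b (e * r) ∣ ∑ i ∈ range r, (a ^ e) ^ i * (b ^ e) ^ (r - 1 - i) := by
  have hmem : e ∈ (e * r).properDivisors :=
    Nat.mem_properDivisors.2 ⟨dvd_mul_right e r, lt_mul_right (Nat.pos_of_ne_zero he) hr⟩
  have hdvd := homCyclotomic_mul_dvd_pow_sub_pow a b hmem
  rw [mul_comm, pow_mul, pow_mul, ← geom_sum₂_mul (a ^ e)] at hdvd
  exact (mul_dvd_mul_iff_right (sub_ne_zero.2 hab)).1 hdvd

lemma eq_of_prime_dvd_homCyclotomic {a b : ℤ} (hp : p.Prime) (hr : r.Prime) (he : e ≠ 0)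
    (hab : a ^ e ≠ b ^ e) (hpb : ¬ (p : ℤ) ∣ b) (hpe : (p : ℤ) ∣ a ^ e - b ^ e)
    (hdvd : (p : ℤ) ∣ homCyclotomic a b (e * r)) : r = p := by
  have hsum := hdvd.trans (homCyclotomic_dvd_geom_sum he hr.one_lt hab)
  have hpZ := Nat.prime_iff_prime_int.1 hp
  rw [dvd_geom_sum₂_iff_of_dvd_sub hpe] at hsum
  have hpr := (hpZ.dvd_or_dvd hsum).resolve_right fun h ↦
    hpb (hpZ.dvd_of_dvd_pow (hpZ.dvd_of_dvd_pow h))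
  exact ((Nat.prime_dvd_prime_iff_eq hp hr).1 (mod_cast hpr)).symm

lemma not_sq_dvd_homCyclotomic {a b : ℤ} (hp : p.Prime) (hp_odd : Odd p) (he : e ≠ 0)
    (hab : a ^ e ≠ b ^ e) (hpa : ¬ (p : ℤ) ∣ a) (hpe : (p : ℤ) ∣ a ^ e - b ^ e) :
    ¬ (p : ℤ) ^ 2 ∣ homCyclotomic a b (e * p) := fun hsq ↦ by
  have hpZ := Nat.prime_iff_prime_int.1 hp
  have hmult := le_emultiplicity_of_pow_dvd <|
    hsq.trans (homCyclotomic_dvd_geom_sum he hp.one_lt hab)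
  rw [emultiplicity_geom_sum₂_eq_one hpZ hp_odd hpe fun h ↦ hpa (hpZ.dvd_of_dvd_pow h)] at hmult
  norm_num at hmult

/- A prime dividing the homogenized cyclotomic value without being primitive has a period `o`
that is a proper divisor of `d`; every prime dividing `d / o` must then be `p` itself, while `o`
divides `p - 1`. -/
lemma prime_dvd_homCyclotomic_of_not_primitive (hab : a.Coprime b) (hba : b < a) (hd : 1 < d)
    (hd_odd : Odd d) (hp : p.Prime) (hdvd : (p : ℤ) ∣ homCyclotomic a b d)
    (hnot : ¬ IsPrimitivePrimeDivisor p a b d) :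
    p ∣ d ∧ ¬ (p : ℤ) ^ 2 ∣ homCyclotomic a b d ∧
      ∀ r : ℕ, r.Prime → r ∣ d → r ≠ p → r ∣ p - 1 := by
  have hpd : a ^ d ≡ b ^ d [MOD p] := pow_modEq_pow_iff_intCast_dvd.2 <|
    (hdvd.mul_left _).trans <| homCyclotomic_mul_dvd_pow_sub_pow _ _ (e := 1) <|
      Nat.mem_properDivisors.2 ⟨one_dvd d, hd⟩
  obtain ⟨hpa, hpb⟩ := not_dvd_of_pow_modEq_pow hab hp (by omega) hpd
  obtain ⟨o, ho, hmod⟩ := exists_dvd_sub_one_forall_pow_modEq_pow_iff hp hpa hpb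
  obtain ⟨t, rfl⟩ := (hmod d).1 hpd
  have ht : t ≠ 1 := by
    rintro rfl
    exact hnot ⟨hp, by rwa [mul_one]⟩
  have hprime : ∀ r : ℕ, r.Prime → r ∣ t → r = p ∧ ¬ (p : ℤ) ^ 2 ∣ homCyclotomic a b (o * t) := by
    rintro r hr ⟨s, rfl⟩
    rw [mul_comm r s, ← mul_assoc] at *
    have he : o * s ≠ 0 := by
      rintro h
      simp [h] at hd
    have hne : (a : ℤ) ^ (o * s) ≠ (b : ℤ) ^ (o * s) := mod_cast (Nat.pow_lt_pow_left hba he).ne'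
    have hpe := pow_modEq_pow_iff_intCast_dvd.1 ((hmod _).2 (dvd_mul_right o s))
    obtain rfl := eq_of_prime_dvd_homCyclotomic hp hr he hne (mod_cast hpb) hpe hdvd
    exact ⟨rfl, not_sq_dvd_homCyclotomic hp (Nat.odd_mul.1 hd_odd).2 he hne (mod_cast hpa) hpe⟩
  obtain ⟨r, hr, hrt⟩ := Nat.exists_prime_and_dvd ht
  obtain ⟨rfl, hsq⟩ := hprime r hr hrt
  refine ⟨hrt.mul_left _, hsq, fun r' hr' hdvd' hne ↦ ?_⟩
  exact ((hr'.dvd_mul.1 hdvd').resolve_right fun h ↦ hne (hprime r' hr' h).1).trans ho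

/- Without a primitive prime divisor, the homogenized cyclotomic value would be a single prime
`p ∣ d`, which is too small. -/
theorem exists_isPrimitivePrimeDivisor (hab : a.Coprime b) (hb : 0 < b) (hba : b + 2 ≤ a)
    (hd : 1 < d) (hd_odd : Odd d) : ∃ p, IsPrimitivePrimeDivisor p a b d := by
  by_contra! hnone
  have hlarge : 2 ^ d.totient < homCyclotomic a b d :=
    two_pow_totient_lt_homCyclotomic (mod_cast hb) (mod_cast hba) hd
  have hprime {p : ℕ} (hp : p.Prime) (hdvd : (p : ℤ) ∣ homCyclotomic a b d) :=
    prime_dvd_homCyclotomic_of_not_primitive hab (by omega) hd hd_odd hp hdvd (hnone p)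
  obtain ⟨P, hP⟩ := Int.eq_ofNat_of_zero_le (hlarge.le.trans' (by positivity))
  rw [hP] at hlarge hprime
  norm_cast at hlarge
  simp only [Int.natCast_dvd_natCast] at hprime
  obtain ⟨p, hp, c, rfl⟩ := Nat.exists_prime_and_dvd (Nat.one_le_two_pow.trans_lt hlarge).ne'
  obtain ⟨hpd, hsq, hdiv⟩ := hprime hp (dvd_mul_right p c)
  have hc : c = 1 := by
    by_contra hc
    obtain ⟨p', hp', hp'c⟩ := Nat.exists_prime_and_dvd hc
    have hne : p' ≠ p := by
      rintro rfl
      exact hsq (mod_cast (sq p' ▸ Nat.mul_dvd_mul_left p' hp'c))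
    obtain ⟨hpd', -, hdiv'⟩ := hprime hp' (hp'c.mul_left p)
    have hle := Nat.le_of_dvd (Nat.sub_pos_of_lt hp.one_lt) (hdiv p' hp' hpd' hne)
    have hle' := Nat.le_of_dvd (Nat.sub_pos_of_lt hp'.one_lt) (hdiv' p hp hpd hne.symm)
    omega
  have htotient : p - 1 ≤ d.totient := Nat.totient_prime hp ▸
    Nat.le_of_dvd (Nat.totient_pos.2 (by omega)) (Nat.totient_dvd_of_dvd hpd)
  have hpow : 2 ^ (p - 1) ≤ 2 ^ d.totient := Nat.pow_le_pow_right two_pos htotient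
  have hlt : p - 1 < 2 ^ (p - 1) := Nat.lt_two_pow_self
  rw [hc, mul_one] at hlarge
  omega

end PrimitivePrimeDivisor

section PowQuot

/-- The quotient `(x ^ e - y ^ e) / (x - y)`, written as a sum so that it needs neither
subtraction nor division of the bases. -/
def powQuot (x y e : ℕ) : ℕ := ∑ i ∈ range e, x ^ i * y ^ (e - 1 - i)

variable {x y e p : ℕ}

lemma sub_mul_powQuot (hyx : y ≤ x) (e : ℕ) : (x - y) * powQuot x y e = x ^ e - y ^ e := by
  rw [mul_comm, powQuot, geom_sum₂_mul_of_ge hyx]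

lemma powQuot_one (x y : ℕ) : powQuot x y 1 = 1 := by simp [powQuot]

lemma powQuot_pos (hx : 0 < x) (he : 0 < e) : 0 < powQuot x y e := by
  refine sum_pos' (fun _ _ ↦ Nat.zero_le _) ⟨e - 1, mem_range.2 (by omega), ?_⟩
  rw [Nat.sub_self, pow_zero, mul_one]
  exact pow_pos hx _

lemma powQuot_mul_mul (D x y e : ℕ) :
    powQuot (D * x) (D * y) e = D ^ (e - 1) * powQuot x y e := by
  rw [powQuot, powQuot, mul_sum]
  refine sum_congr rfl fun i hi ↦ ?_
  rw [← Nat.add_sub_of_le (Nat.le_sub_one_of_lt (mem_range.1 hi)), pow_add, mul_pow, mul_pow,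
    Nat.add_sub_cancel_left]
  ring

lemma powQuot_add (x y n k : ℕ) :
    powQuot x y (n + k) = x ^ k * powQuot x y n + y ^ n * powQuot x y k := by
  rw [powQuot, add_comm n k, sum_range_add, add_comm, powQuot, powQuot, mul_sum, mul_sum]
  congr 1
  · refine sum_congr rfl fun i _ ↦ ?_
    rw [pow_add, show k + n - 1 - (k + i) = n - 1 - i by omega, mul_assoc]
  · refine sum_congr rfl fun i hi ↦ ?_
    rw [mem_range] at hi
    rw [show k + n - 1 - i = n + (k - 1 - i) by omega, pow_add]
    ring

lemma powQuot_strictMono (hx : 0 < x) (hy : 0 < y) : StrictMono (powQuot x y) := by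
  refine strictMono_nat_of_lt_succ fun n ↦ ?_
  rw [powQuot_add, powQuot_one, pow_one, mul_one]
  exact lt_add_of_le_of_pos (Nat.le_mul_of_pos_left _ hx) (pow_pos hy n)

lemma prime_dvd_powQuot_iff (hp : p.Prime) (hyx : y ≤ x) (hdvd : p ∣ x - y) (hy : ¬ p ∣ y) :
    p ∣ powQuot x y e ↔ p ∣ e := by
  have hdvdZ : (p : ℤ) ∣ (x : ℤ) - y := by
    rw [← Nat.cast_sub hyx]
    exact mod_cast hdvd
  have hiff := dvd_geom_sum₂_iff_of_dvd_sub (n := e) hdvdZ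
  norm_cast at hiff
  rw [powQuot, hiff, hp.dvd_mul, or_iff_left fun h ↦ hy (hp.dvd_of_dvd_pow h)]

end PowQuot

section Valuation

variable {p q a b m n : ℕ}

lemma pow_sub_pow_pos (hba : b < a) (hn : n ≠ 0) : 0 < a ^ n - b ^ n :=
  Nat.sub_pos_of_lt (Nat.pow_lt_pow_left hba hn)

/- With `α` the exponent of `p` in `n` and `c = n / p ^ α`, the cofactor
`powQuot (a ^ p ^ α) (b ^ p ^ α) c` is prime to `p`, and `a ^ p ^ α - b ^ p ^ α` divides
`a ^ m - b ^ m`. -/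
lemma padicValNat_pow_sub_pow_le (hp : p.Prime) (hba : b < a) (hdvd : p ∣ a - b) (hb : ¬ p ∣ b)
    (hm : m ≠ 0) (hn : n ≠ 0) (hval : padicValNat p n ≤ padicValNat p m) :
    padicValNat p (a ^ n - b ^ n) ≤ padicValNat p (a ^ m - b ^ m) := by
  have : Fact p.Prime := ⟨hp⟩
  set α := padicValNat p n with hα
  obtain ⟨c, hc⟩ : p ^ α ∣ n := pow_padicValNat_dvd
  have hpc : ¬ p ∣ c := fun ⟨c', hc'⟩ ↦
    pow_succ_padicValNat_not_dvd hn ⟨c', by rw [← hα, pow_succ, mul_assoc, ← hc', ← hc]⟩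
  have hcop : ¬ p ∣ powQuot (a ^ p ^ α) (b ^ p ^ α) c := by
    rwa [prime_dvd_powQuot_iff hp (Nat.pow_le_pow_left hba.le _)
      (hdvd.trans (Nat.sub_dvd_pow_sub_pow a b _)) fun h ↦ hb (hp.dvd_of_dvd_pow h)]
  have hfactor : a ^ n - b ^ n =
      (a ^ p ^ α - b ^ p ^ α) * powQuot (a ^ p ^ α) (b ^ p ^ α) c := by
    rw [sub_mul_powQuot (Nat.pow_le_pow_left hba.le _), ← pow_mul, ← pow_mul, ← hc]
  have hdvd_m : a ^ p ^ α - b ^ p ^ α ∣ a ^ m - b ^ m := by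
    obtain ⟨c', hc'⟩ : p ^ α ∣ m := (pow_dvd_pow p hval).trans pow_padicValNat_dvd
    rw [hc', pow_mul, pow_mul]
    exact Nat.sub_dvd_pow_sub_pow _ _ _
  rw [← padicValNat_dvd_iff_le (pow_sub_pow_pos hba hm).ne']
  refine Dvd.dvd.trans ?_ hdvd_m
  exact (((Nat.Prime.coprime_iff_not_dvd hp).2 hcop).pow_left _).dvd_of_dvd_mul_right
    (hfactor ▸ pow_padicValNat_dvd)

/- The odd prime `q` divides at most one of the even numbers `u + v` and `u - v`. -/
lemma pow_padicValNat_sq_sub_sq_lt {u v : ℕ} (hq : q.Prime) (hq_odd : Odd q) (hu : Odd u)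
    (hv : Odd v) (hvu : v < u) (hqu : ¬ q ∣ u) : q ^ padicValNat q (u ^ 2 - v ^ 2) < u := by
  have hdvd : q ^ padicValNat q (u ^ 2 - v ^ 2) ∣ (u + v) * (u - v) := by
    rw [← Nat.sq_sub_sq]
    exact pow_padicValNat_dvd
  set t := q ^ padicValNat q (u ^ 2 - v ^ 2)
  have hcop2 : Nat.Coprime 2 q := Nat.coprime_two_left.2 hq_odd
  by_cases hsub : q ∣ u - v
  · have hadd : ¬ q ∣ u + v := fun hadd ↦ by
      have hsum := Nat.dvd_add hadd hsub
      rw [show u + v + (u - v) = 2 * u by omega] at hsum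
      exact hqu (hcop2.symm.dvd_of_dvd_mul_left hsum)
    have hle := Nat.le_of_dvd (by omega) <|
      (((Nat.Prime.coprime_iff_not_dvd hq).2 hadd).pow_left _).dvd_of_dvd_mul_left hdvd
    have := hv.pos
    omega
  · have hadd : 2 * t ∣ u + v := (hcop2.pow_right _).mul_dvd_of_dvd_of_dvd
      (hu.add_odd hv).two_dvd <|
      (((Nat.Prime.coprime_iff_not_dvd hq).2 hsub).pow_left _).dvd_of_dvd_mul_right hdvd
    have hle := Nat.le_of_dvd (by omega) hadd
    omega

lemma padicValNat_pow_sub_pow_le_add (hq : q.Prime) (hq_odd : Odd q) (hba : b < a)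
    (ha : ¬ q ∣ a) (hb : ¬ q ∣ b) (hn : n ≠ 0) :
    padicValNat q (a ^ n - b ^ n) ≤
      padicValNat q (a ^ (q - 1) - b ^ (q - 1)) + padicValNat q n := by
  have : Fact q.Prime := ⟨hq⟩
  have hfermat {c : ℕ} (hc : ¬ q ∣ c) : c ^ (q - 1) ≡ 1 [MOD q] := by
    rw [← Nat.totient_prime hq]
    exact Nat.ModEq.pow_totient ((Nat.Prime.coprime_iff_not_dvd hq).2 hc).symm
  have hlt : b ^ (q - 1) < a ^ (q - 1) :=
    Nat.pow_lt_pow_left hba (Nat.sub_pos_of_lt hq.one_lt).ne'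
  have hdvd : q ∣ a ^ (q - 1) - b ^ (q - 1) :=
    (Nat.modEq_iff_dvd' hlt.le).1 ((hfermat hb).trans (hfermat ha).symm)
  rw [← padicValNat.pow_sub_pow hq_odd hlt hdvd (fun h ↦ ha (hq.dvd_of_dvd_pow h)) hn,
    ← padicValNat_dvd_iff_le (pow_sub_pow_pos hlt hn).ne', ← pow_mul, ← pow_mul, mul_comm,
    pow_mul, pow_mul]
  exact pow_padicValNat_dvd.trans (Nat.sub_dvd_pow_sub_pow _ _ _)

lemma pow_padicValNat_pow_sub_pow_lt (hq : q.Prime) (hq_odd : Odd q) (hab : a.Coprime b)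
    (ha_odd : Odd a) (hb_odd : Odd b) (hba : b < a) (hn : n ≠ 0) :
    q ^ padicValNat q (a ^ n - b ^ n) < q ^ padicValNat q n * a ^ ((q - 1) / 2) := by
  obtain ⟨h, hh⟩ := hq_odd
  have hq1 := hq.one_lt
  have hh0 : h ≠ 0 := by omega
  rw [show (q - 1) / 2 = h by omega]
  have hpos := hb_odd.pos
  by_cases hdvd : q ∣ a ^ n - b ^ n
  · obtain ⟨hqa, hqb⟩ := not_dvd_of_pow_modEq_pow hab hq hn
      ((Nat.modEq_iff_dvd' (Nat.pow_le_pow_left hba.le n)).2 hdvd).symm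
    calc q ^ padicValNat q (a ^ n - b ^ n)
        ≤ q ^ (padicValNat q (a ^ (q - 1) - b ^ (q - 1)) + padicValNat q n) :=
          Nat.pow_le_pow_right hq.pos
            (padicValNat_pow_sub_pow_le_add hq ⟨h, hh⟩ hba hqa hqb hn)
      _ = q ^ padicValNat q n * q ^ padicValNat q ((a ^ h) ^ 2 - (b ^ h) ^ 2) := by
          rw [pow_add, mul_comm, ← pow_mul, ← pow_mul, show q - 1 = h * 2 by omega]
      _ < q ^ padicValNat q n * a ^ h := by
          refine Nat.mul_lt_mul_of_pos_left ?_ (pow_pos hq.pos _)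
          exact pow_padicValNat_sq_sub_sq_lt hq ⟨h, hh⟩ ha_odd.pow hb_odd.pow
            (Nat.pow_lt_pow_left hba hh0) fun h ↦ hqa (hq.dvd_of_dvd_pow h)
  · rw [padicValNat.eq_zero_of_not_dvd hdvd, pow_zero]
    exact one_lt_mul (Nat.one_le_pow _ _ hq.pos) (Nat.one_lt_pow hh0 (by omega))

end Valuation

section LogEstimates

lemma sub_one_div_log_le {x y : ℝ} (hx : 1 < x) (hxy : x ≤ y) :
    (y - 1) / Real.log y ≤ y / x * ((x - 1) / Real.log x) := by
  have hlogx := Real.log_pos hx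
  have hlogy := Real.log_pos (hx.trans_le hxy)
  have hsecant := Real.convexOn_mul_log.secant_mono (a := 1) (by simp)
    (Set.mem_Ici.2 (by linarith)) (Set.mem_Ici.2 (by linarith)) hx.ne' (hx.trans_le hxy).ne' hxy
  rw [Real.log_one, mul_zero, sub_zero, sub_zero,
    div_le_div_iff₀ (by linarith) (by linarith)] at hsecant
  rw [div_mul_div_comm, div_le_div_iff₀ hlogy (by positivity)]
  linarith

lemma log_one_add_mul_le {r s : ℝ} (hr : 1 ≤ r) (hs : 0 ≤ s) :
    Real.log (1 + r * s) ≤ r * Real.log (1 + s) := by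
  rw [← Real.log_rpow (by positivity)]
  exact Real.log_le_log (by positivity) (one_add_mul_self_le_rpow_one_add (by linarith) hr)

lemma log_le_log_add_sub_div {x y : ℝ} (hx : 0 < x) (hy : 0 < y) :
    Real.log y ≤ Real.log x + (y - x) / x := by
  have h := Real.log_le_sub_one_of_pos (div_pos hy hx)
  rw [Real.log_div hy.ne' hx.ne'] at h
  rw [sub_div, div_self hx.ne']
  linarith

lemma sixteen_mul_succ_sq_le {j : ℕ} (hj : 4 ≤ j) : 16 * (j + 1) ^ 2 ≤ 25 * 2 ^ j := by
  induction j, hj using Nat.le_induction with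
  | base => norm_num
  | succ j hj ih =>
    rw [pow_succ 2 j]
    nlinarith

lemma succ_mul_log_two_pow_succ_le (j : ℕ) :
    (j + 1) * Real.log (2 ^ j + 1) ≤ 1.32 * 2 ^ j - 0.44 := by
  have hlog2 := Real.log_two_lt_d9
  have hlog3 := Real.log_three_lt_d9
  have hlog5 := Real.log_five_lt_d9
  have hlog9 : Real.log 9 = 2 * Real.log 3 := by norm_num [← Real.log_rpow]
  rcases lt_or_ge j 4 with hj | hj
  · interval_cases j <;> norm_num [hlog9] <;> linarith
  · have hsq : 16 * ((j : ℝ) + 1) ^ 2 ≤ 25 * 2 ^ j := mod_cast sixteen_mul_succ_sq_le hj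
    have hlog : Real.log (2 ^ j + 1) ≤ (j + 1) * Real.log 2 := by
      rw [← Nat.cast_succ, ← Real.log_pow, pow_succ]
      gcongr
      linarith [one_le_pow₀ (M₀ := ℝ) one_le_two (n := j)]
    have hj' : (4 : ℝ) ≤ j := mod_cast hj
    calc (j + 1) * Real.log (2 ^ j + 1) ≤ (j + 1) ^ 2 * Real.log 2 := by nlinarith
      _ ≤ 1.32 * 2 ^ j - 0.44 := by nlinarith

lemma succ_mul_log_le {j : ℕ} {x : ℝ} (hx : 2 ^ j + 1 ≤ x) :
    (j + 1) * Real.log x ≤ 1.32 * x - 1.76 := by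
  have hpow : ((j : ℝ) + 1) ≤ 2 ^ j := mod_cast Nat.lt_two_pow_self (n := j)
  have hslope : ((j : ℝ) + 1) * ((x - (2 ^ j + 1)) / (2 ^ j + 1)) ≤ x - (2 ^ j + 1) := by
    rw [mul_div_left_comm]
    exact mul_le_of_le_one_right (by linarith) ((div_le_one (by positivity)).2 (by linarith))
  have htangent := log_le_log_add_sub_div (x := 2 ^ j + 1) (y := x) (by positivity)
    (lt_of_lt_of_le (by positivity) hx)
  calc (j + 1) * Real.log x
      ≤ (j + 1) * Real.log (2 ^ j + 1) + (j + 1) * ((x - (2 ^ j + 1)) / (2 ^ j + 1)) := by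
        rw [← mul_add]
        gcongr
    _ ≤ 1.32 * x - 1.76 := by linarith [succ_mul_log_two_pow_succ_le j]

/- Every term is at most `3 / (4 * r) * log (2 + c)`, and there are few of them since
`2 ^ (#Q - 1) ≤ 1 + c`. -/
lemma sum_mul_log_succ_le {Q : Finset ℕ} {R : ℕ → ℕ} {r : ℕ} {c : ℝ} (hr : 0 < r) (hrQ : r ∈ Q)
    (hmin : ∀ q ∈ Q, r ≤ q) (hR : ∀ q ∈ Q, (R q : ℝ) ≤ 1 + q / r * c)
    (hcard : 2 ^ (#Q - 1) ≤ R r) :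
    ∑ q ∈ Q, 3 / (4 * q) * Real.log (R q + 1) ≤ (0.66 + 0.99 * c) / r := by
  have hr' : (0 : ℝ) < r := mod_cast hr
  have hpow : 2 ^ (#Q - 1) ≤ 1 + c := by
    have := hR r hrQ
    rw [div_self hr'.ne', one_mul] at this
    exact le_trans (mod_cast hcard) this
  have hc : 0 ≤ c := by linarith [one_le_pow₀ (M₀ := ℝ) one_le_two (n := #Q - 1)]
  have hterm : ∀ q ∈ Q, 3 / (4 * q) * Real.log (R q + 1) ≤ 3 / (4 * r) * Real.log (2 + c) :=
    fun q hq ↦ by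
      have hqr : 1 ≤ (q : ℝ) / r := (one_le_div hr').2 (mod_cast hmin q hq)
      have hq' : (0 : ℝ) < q := mod_cast hr.trans_le (hmin q hq)
      calc 3 / (4 * q) * Real.log (R q + 1)
          ≤ 3 / (4 * q) * Real.log (1 + q / r * (1 + c)) := by
            gcongr 3 / (4 * q) * Real.log ?_
            linarith [hR q hq]
        _ ≤ 3 / (4 * q) * (q / r * Real.log (1 + (1 + c))) := by
            gcongr
            exact log_one_add_mul_le hqr (by linarith)
        _ = 3 / (4 * r) * Real.log (2 + c) := by
            rw [← add_assoc, one_add_one_eq_two]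
            field_simp
  have hcardQ : ((#Q - 1 : ℕ) : ℝ) + 1 = #Q := mod_cast Nat.sub_add_cancel (card_pos.2 ⟨r, hrQ⟩)
  calc ∑ q ∈ Q, 3 / (4 * q) * Real.log (R q + 1)
      ≤ 3 / (4 * r) * (#Q * Real.log (2 + c)) := by
        rw [mul_left_comm, ← nsmul_eq_mul]
        exact sum_le_card_nsmul Q _ _ hterm
    _ ≤ 3 / (4 * r) * (1.32 * (2 + c) - 1.76) := by
        rw [← hcardQ]
        gcongr
        exact succ_mul_log_le (by linarith)
    _ = (0.66 + 0.99 * c) / r := by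
        field_simp
        ring

lemma two_mul_pow_three_le_factorial {g : ℕ} (hg : 5 ≤ g) : 2 * g ^ 3 ≤ 3 * g.factorial := by
  induction g, hg using Nat.le_induction with
  | base => decide
  | succ g hg ih =>
    have hsq : (g + 1) ^ 2 ≤ g ^ 3 := by nlinarith
    calc 2 * (g + 1) ^ 3 = (g + 1) * (2 * (g + 1) ^ 2) := by ring
      _ ≤ (g + 1) * (3 * g.factorial) := Nat.mul_le_mul_left _ (by omega)
      _ = 3 * (g + 1).factorial := by rw [Nat.factorial_succ]; ring

section Factorial

variable {D u g : ℕ}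

lemma three_mul_log_le_of_factorial_lt (hg : 5 ≤ g) (hu : 3 ≤ u)
    (h : g.factorial < D ^ 2 * u) :
    Real.log 2 + 3 * Real.log g ≤ 2 * Real.log (D * u : ℕ) := by
  have hnat : 2 * g ^ 3 ≤ (D * u) ^ 2 :=
    calc 2 * g ^ 3 ≤ 3 * g.factorial := two_mul_pow_three_le_factorial hg
      _ ≤ u * (D ^ 2 * u) := Nat.mul_le_mul hu h.le
      _ = (D * u) ^ 2 := by ring
  have hlog : Real.log (2 * (g : ℝ) ^ 3) ≤ Real.log (((D * u : ℕ) : ℝ) ^ 2) :=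
    Real.log_le_log (by positivity) (mod_cast hnat)
  rw [Real.log_mul two_ne_zero (by positivity), Real.log_pow, Real.log_pow] at hlog
  exact_mod_cast hlog

lemma factorial_lt_mul_or_two_mul_le (hD : 0 < D) (h : g.factorial < D ^ 2 * u) :
    g.factorial < D * u ∨ 2 * u ≤ D * u := by
  obtain rfl | hD2 : D = 1 ∨ 2 ≤ D := by omega
  · exact .inl (by simpa using h)
  · exact .inr (Nat.mul_le_mul_right u hD2)

lemma log_add_le_of_factorial_lt_of_three_le (hD : 0 < D) (hg : 0 < g) (hu : 3 ≤ u)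
    (h : g.factorial < D ^ 2 * u) :
    Real.log g + 0.132 ≤ 0.7534 * Real.log (D * u : ℕ) := by
  have hlog2 := Real.log_two_gt_d9
  have hlog2' := Real.log_two_lt_d9
  have hlog3 := Real.log_three_gt_d9
  have hlog3' := Real.log_three_lt_d9
  have hlog {c : ℕ} (hc : 0 < c) (hle : c ≤ D * u) : Real.log c ≤ Real.log (D * u : ℕ) :=
    Real.log_le_log (mod_cast hc) (mod_cast hle)
  have hL3 := hlog three_pos (hu.trans (Nat.le_mul_of_pos_left u hD))
  rw [Nat.cast_ofNat] at hL3
  rcases lt_or_ge g 5 with hg5 | hg5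
  · interval_cases g
    · rw [Nat.cast_one, Real.log_one]
      linarith
    · rw [Nat.cast_ofNat]
      linarith
    · have hL6 := hlog (c := 6) (by norm_num) (by
        have := factorial_lt_mul_or_two_mul_le hD h
        norm_num [Nat.factorial] at this
        omega)
      have hlog6 : Real.log 6 = Real.log 2 + Real.log 3 := by norm_num [← Real.log_mul]
      rw [Nat.cast_ofNat] at hL6 ⊢
      linarith
    · have hL8 := hlog (c := 8) (by norm_num) (by
        norm_num [Nat.factorial] at h
        nlinarith)
      have hlog8 : Real.log 8 = 3 * Real.log 2 := by norm_num [← Real.log_rpow]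
      rw [Nat.cast_ofNat] at hL8 ⊢
      linarith [Real.log_four_eq]
  · linarith [three_mul_log_le_of_factorial_lt hg5 hu h]

lemma log_add_le_of_factorial_lt_of_five_le (hD : 0 < D) (hg : 0 < g) (hu : 5 ≤ u)
    (h : g.factorial < D ^ 2 * u) :
    Real.log g + 0.22 ≤ 0.699 * Real.log (D * u : ℕ) := by
  have hlog2 := Real.log_two_gt_d9
  have hlog2' := Real.log_two_lt_d9
  have hlog3' := Real.log_three_lt_d9
  have hlog5 := Real.log_five_gt_d9
  have hlog {c : ℕ} (hc : 0 < c) (hle : c ≤ D * u) : Real.log c ≤ Real.log (D * u : ℕ) :=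
    Real.log_le_log (mod_cast hc) (mod_cast hle)
  have hL5 := hlog (by norm_num) (hu.trans (Nat.le_mul_of_pos_left u hD))
  rw [Nat.cast_ofNat] at hL5
  rcases lt_or_ge g 5 with hg5 | hg5
  · interval_cases g
    · rw [Nat.cast_one, Real.log_one]
      linarith
    · rw [Nat.cast_ofNat]
      linarith
    · have hL7 := hlog (c := 7) (by norm_num) (by
        have := factorial_lt_mul_or_two_mul_le hD h
        norm_num [Nat.factorial] at this
        omega)
      have hlog7 : 4 * Real.log 2 + Real.log 3 ≤ 2 * Real.log 7 := by
        have hle : Real.log (2 ^ 4 * 3) ≤ Real.log (7 ^ 2) :=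
          Real.log_le_log (by norm_num) (by norm_num)
        rwa [Real.log_mul (by norm_num) (by norm_num), Real.log_pow, Real.log_pow] at hle
      rw [Nat.cast_ofNat] at hL7 ⊢
      linarith [Real.log_three_gt_d9]
    · have hL10 := hlog (c := 10) (by norm_num) (by
        have := factorial_lt_mul_or_two_mul_le hD h
        norm_num [Nat.factorial] at this
        omega)
      rw [Nat.cast_ofNat] at hL10 ⊢
      linarith [Real.log_four_eq, Real.log_ten_eq]
  · linarith [three_mul_log_le_of_factorial_lt hg5 (by omega) h]

end Factorial

end LogEstimates

section ExcessPrimes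

/-- The primes occurring in `m` with a larger exponent than in `n`. -/
def excessPrimes (m n : ℕ) : Finset ℕ := {q ∈ m.primeFactors | padicValNat q n < padicValNat q m}

variable {m n q o : ℕ}

lemma mem_excessPrimes :
    q ∈ excessPrimes m n ↔ q ∈ m.primeFactors ∧ padicValNat q n < padicValNat q m := by
  simp only [excessPrimes, mem_filter]

lemma prime_of_mem_excessPrimes (hq : q ∈ excessPrimes m n) : q.Prime :=
  Nat.prime_of_mem_primeFactors (mem_excessPrimes.1 hq).1

lemma dvd_of_mem_excessPrimes (hq : q ∈ excessPrimes m n) : q ∣ m :=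
  Nat.dvd_of_mem_primeFactors (mem_excessPrimes.1 hq).1

lemma dvd_of_forall_excessPrimes_not_dvd (hm : m ≠ 0) (hn : n ≠ 0) (ho : o ∣ m)
    (h : ∀ q ∈ excessPrimes m n, ¬ q ∣ o) : o ∣ n := by
  have ho0 : o ≠ 0 := ne_zero_of_dvd_ne_zero hm ho
  rw [← Nat.factorization_prime_le_iff_dvd ho0 hn]
  intro q hq
  by_cases hqo : q ∣ o
  · have hle : padicValNat q m ≤ padicValNat q n := not_lt.1 fun hlt ↦
      h q (mem_excessPrimes.2 ⟨Nat.mem_primeFactors.2 ⟨hq, hqo.trans ho, hm⟩, hlt⟩) hqo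
    rw [← Nat.factorization_def _ hq, ← Nat.factorization_def _ hq] at hle
    exact ((Nat.factorization_le_iff_dvd ho0 hm).2 ho q).trans hle
  · rw [Nat.factorization_eq_zero_of_not_dvd hqo]
    exact Nat.zero_le _

lemma excessPrimes_nonempty (hn : n ≠ 0) (hnm : n < m) : (excessPrimes m n).Nonempty := by
  by_contra! hempty
  have hdvd : m ∣ n := dvd_of_forall_excessPrimes_not_dvd (by omega) hn dvd_rfl (by simp [hempty])
  exact absurd (Nat.le_of_dvd (Nat.pos_of_ne_zero hn) hdvd) (by omega)

lemma dvd_of_dvd_add_of_forall_excessPrimes_not_dvd {k : ℕ} (hn : n ≠ 0) (ho : o ∣ n + k)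
    (h : ∀ q ∈ excessPrimes (n + k) n, ¬ q ∣ o) : o ∣ k :=
  (Nat.dvd_add_right (dvd_of_forall_excessPrimes_not_dvd (by omega) hn ho h)).1 ho

lemma pow_padicValNat_dvd_of_mem_excessPrimes {k : ℕ} (hq : q ∈ excessPrimes (n + k) n) :
    q ^ padicValNat q n ∣ k :=
  (Nat.dvd_add_right pow_padicValNat_dvd).1 <|
    (pow_dvd_pow q (mem_excessPrimes.1 hq).2.le).trans pow_padicValNat_dvd

end ExcessPrimes

/-- A hypothetical solution `φ(N) = z (x ^ n - y ^ n) / (x - y)` of the equation with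
`N = z (x ^ m - y ^ m) / (x - y)` and `n < m`, where `x = D a`, `y = D b` with `a`, `b` coprime,
and `m = n + k`. -/
structure ReducedSolution (D a b z n k N : ℕ) : Prop where
  coprime : a.Coprime b
  b_pos : 0 < b
  lt : b < a
  D_pos : 0 < D
  z_pos : 0 < z
  z_le : z ≤ D * (a - b)
  n_pos : 0 < n
  k_pos : 0 < k
  N_eq : N = z * powQuot (D * a) (D * b) (n + k)
  totient_eq : N.totient = z * powQuot (D * a) (D * b) n

namespace ReducedSolution

variable {D a b z n k N p q d : ℕ}

section Basic

lemma a_pos (s : ReducedSolution D a b z n k N) : 0 < a := s.b_pos.trans s.lt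

lemma N_pos (s : ReducedSolution D a b z n k N) : 0 < N :=
  s.N_eq ▸ Nat.mul_pos s.z_pos
    (powQuot_pos (Nat.mul_pos s.D_pos s.a_pos) (Nat.add_pos_left s.n_pos k))

lemma pow_mul_totient_lt (s : ReducedSolution D a b z n k N) : (D * a) ^ k * N.totient < N := by
  have hpos : 0 < z * ((D * b) ^ n * powQuot (D * a) (D * b) k) :=
    Nat.mul_pos s.z_pos <| Nat.mul_pos (pow_pos (Nat.mul_pos s.D_pos s.b_pos) n) <|
      powQuot_pos (Nat.mul_pos s.D_pos s.a_pos) s.k_pos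
  calc (D * a) ^ k * N.totient = z * ((D * a) ^ k * powQuot (D * a) (D * b) n) := by
        rw [s.totient_eq, Nat.mul_left_comm]
    _ < z * ((D * a) ^ k * powQuot (D * a) (D * b) n) +
        z * ((D * b) ^ n * powQuot (D * a) (D * b) k) := Nat.lt_add_of_pos_right hpos
    _ = N := by rw [s.N_eq, powQuot_add, mul_add]

lemma log_pow_lt_sum (s : ReducedSolution D a b z n k N) :
    Real.log ((D * a) ^ k : ℕ) < ∑ p ∈ N.primeFactors, Real.log ((p : ℝ) / ((p : ℝ) - 1)) := by
  rw [← log_div_totient s.N_pos.ne']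
  refine Real.log_lt_log (mod_cast pow_pos (Nat.mul_pos s.D_pos s.a_pos) k) ?_
  rw [lt_div_iff₀ (mod_cast Nat.totient_pos.2 s.N_pos)]
  exact_mod_cast s.pow_mul_totient_lt

lemma pow_le_card_primeFactors (s : ReducedSolution D a b z n k N) :
    (D * a) ^ k ≤ #N.primeFactors := by
  have hlog := s.log_pow_lt_sum.trans_le <|
    sum_log_div_sub_one_le fun p hp ↦ one_lt_of_mem_primeFactors hp
  have hlt := (Real.log_lt_log_iff (mod_cast pow_pos (Nat.mul_pos s.D_pos s.a_pos) k)
    (by positivity)).1 hlog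
  exact Nat.lt_succ_iff.1 (mod_cast hlt)

/- Both `φ(N)` and `N` are `z / (a - b)` times a power of `D` times a difference of powers, so
this is the valuation inequality between `N` and `φ(N)` with the common factors removed. -/
lemma card_primeFactorsOneMod_add_le (s : ReducedSolution D a b z n k N) (hq : q.Prime) :
    #(primeFactorsOneMod q N) + padicValNat q (a ^ (n + k) - b ^ (n + k)) ≤
      padicValNat q (a ^ n - b ^ n) + if q ∣ N then 1 else 0 := by
  have : Fact q.Prime := ⟨hq⟩
  have hz := s.z_pos.ne'
  have hD (e : ℕ) : D ^ (e - 1) ≠ 0 := (pow_pos s.D_pos _).ne'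
  have hpq {e : ℕ} (he : 0 < e) : powQuot a b e ≠ 0 := (powQuot_pos s.a_pos he).ne'
  have hsub {e : ℕ} (he : 0 < e) : padicValNat q (a ^ e - b ^ e) =
      padicValNat q (a - b) + padicValNat q (powQuot a b e) := by
    rw [← sub_mul_powQuot s.lt.le, padicValNat.mul (Nat.sub_pos_of_lt s.lt).ne' (hpq he)]
  have hval := padicValNat_add_card_primeFactorsOneMod_le hq s.N_pos.ne'
  rw [s.totient_eq, powQuot_mul_mul, padicValNat.mul hz (mul_ne_zero (hD _) (hpq s.n_pos)),
    padicValNat.mul (hD _) (hpq s.n_pos)] at hval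
  conv at hval => lhs; arg 1; rw [s.N_eq, powQuot_mul_mul]
  rw [padicValNat.mul hz (mul_ne_zero (hD _) (hpq (Nat.add_pos_left s.n_pos k))),
    padicValNat.mul (hD _) (hpq (Nat.add_pos_left s.n_pos k))] at hval
  have hDval : padicValNat q (D ^ (n - 1)) ≤ padicValNat q (D ^ (n + k - 1)) := by
    rw [← padicValNat_dvd_iff_le (hD _)]
    exact pow_padicValNat_dvd.trans (pow_dvd_pow D (by omega))
  rw [hsub s.n_pos, hsub (Nat.add_pos_left s.n_pos k)]
  omega

end Basic

section Parity

lemma padicValNat_two_pow_sub_pow_lt (s : ReducedSolution D a b z n k N) :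
    padicValNat 2 (a ^ (n + k) - b ^ (n + k)) < padicValNat 2 (a ^ n - b ^ n) := by
  by_contra! hle
  have hval := s.card_primeFactorsOneMod_add_le Nat.prime_two
  have hcard := card_primeFactors_le N
  have hpow : D * a ≤ #N.primeFactors :=
    (Nat.le_self_pow s.k_pos.ne' _).trans s.pow_le_card_primeFactors
  have hDa : a ≤ D * a := Nat.le_mul_of_pos_left a s.D_pos
  have hlt := s.lt
  have hb := s.b_pos
  split_ifs at hval hcard with hN
  · obtain rfl : a = 2 := by omega
    obtain rfl : b = 1 := by omega
    obtain rfl : D = 1 := by omega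
    obtain rfl : z = 1 := by
      have := s.z_pos
      have := s.z_le
      omega
    have hN_eq : N = 2 ^ (n + k) - 1 := by
      rw [s.N_eq]
      simpa using sub_mul_powQuot one_le_two (n + k)
    have heven : 2 ∣ 2 ^ (n + k) := dvd_pow_self 2 (by have := s.n_pos; omega)
    have := Nat.one_le_two_pow (n := n + k)
    omega
  · omega

lemma odd_and_odd (s : ReducedSolution D a b z n k N) : Odd a ∧ Odd b := by
  have hdvd : 2 ∣ a ^ n - b ^ n := dvd_of_one_le_padicValNat (by
    have := s.padicValNat_two_pow_sub_pow_lt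
    omega)
  have hmod : a ^ n ≡ b ^ n [MOD 2] :=
    ((Nat.modEq_iff_dvd' (Nat.pow_le_pow_left s.lt.le n)).2 hdvd).symm
  have hnot := not_dvd_of_pow_modEq_pow s.coprime Nat.prime_two s.n_pos.ne' hmod
  exact ⟨Nat.odd_iff.2 (by omega), Nat.odd_iff.2 (by omega)⟩

lemma padicValNat_two_lt (s : ReducedSolution D a b z n k N) :
    padicValNat 2 (n + k) < padicValNat 2 n := by
  by_contra! hle
  obtain ⟨ha, hb⟩ := s.odd_and_odd
  exact s.padicValNat_two_pow_sub_pow_lt.not_ge <|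
    padicValNat_pow_sub_pow_le Nat.prime_two s.lt (Nat.Odd.sub_odd ha hb).two_dvd hb.not_two_dvd_nat
      (by have := s.n_pos; omega) s.n_pos.ne' hle

lemma add_two_le (s : ReducedSolution D a b z n k N) : b + 2 ≤ a := by
  obtain ⟨⟨i, hi⟩, ⟨j, hj⟩⟩ := s.odd_and_odd
  have := s.lt
  omega

lemma odd_of_mem_excessPrimes (s : ReducedSolution D a b z n k N)
    (hq : q ∈ excessPrimes (n + k) n) : Odd q := by
  refine (prime_of_mem_excessPrimes hq).odd_of_ne_two ?_
  rintro rfl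
  exact s.padicValNat_two_lt.not_gt (mem_excessPrimes.1 hq).2

lemma three_le_of_mem_excessPrimes (s : ReducedSolution D a b z n k N)
    (hq : q ∈ excessPrimes (n + k) n) : 3 ≤ q := by
  obtain ⟨i, hi⟩ := s.odd_of_mem_excessPrimes hq
  have := (prime_of_mem_excessPrimes hq).two_le
  omega

end Parity

section PrimitivePrimes

lemma exists_isPrimitivePrimeDivisor_mem (s : ReducedSolution D a b z n k N) (hd : 1 < d)
    (hd_odd : Odd d) (hdvd : d ∣ n + k) :
    ∃ p ∈ primeFactorsOneMod d N, IsPrimitivePrimeDivisor p a b d := by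
  obtain ⟨p, hp⟩ := exists_isPrimitivePrimeDivisor s.coprime s.b_pos s.add_two_le hd hd_odd
  refine ⟨p, mem_primeFactorsOneMod.2 ⟨?_, hp.dvd_sub_one s.coprime (by omega)⟩, hp⟩
  have hmod {e : ℕ} : p ∣ a ^ e - b ^ e ↔ d ∣ e := by
    rw [← hp.2, Nat.ModEq.comm, Nat.modEq_iff_dvd' (Nat.pow_le_pow_left s.lt.le e)]
  have hab : ¬ p ∣ a - b := by
    rw [← pow_one a, ← pow_one b, hmod, Nat.dvd_one]
    omega
  have hquot : p ∣ powQuot a b (n + k) := by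
    have := hmod.2 hdvd
    rw [← sub_mul_powQuot s.lt.le] at this
    exact (hp.1.dvd_mul.1 this).resolve_left hab
  refine Nat.mem_primeFactors.2 ⟨hp.1, ?_, s.N_pos.ne'⟩
  rw [s.N_eq, powQuot_mul_mul]
  exact (hquot.mul_left _).mul_left _

lemma primeFactorsOneMod_nonempty (s : ReducedSolution D a b z n k N)
    (hq : q ∈ excessPrimes (n + k) n) : (primeFactorsOneMod q N).Nonempty := by
  obtain ⟨p, hp, -⟩ := s.exists_isPrimitivePrimeDivisor_mem (prime_of_mem_excessPrimes hq).one_lt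
    (s.odd_of_mem_excessPrimes hq) (dvd_of_mem_excessPrimes hq)
  exact ⟨p, hp⟩

lemma not_dvd_sub_of_mem_excessPrimes (s : ReducedSolution D a b z n k N)
    (hq : q ∈ excessPrimes (n + k) n) : ¬ q ∣ a - b := fun hdvd ↦ by
  have hq' := prime_of_mem_excessPrimes hq
  have : Fact q.Prime := ⟨hq'⟩
  have hqa : ¬ q ∣ a := (not_dvd_of_pow_modEq_pow s.coprime hq' one_ne_zero (by
    rw [pow_one, pow_one]
    exact ((Nat.modEq_iff_dvd' s.lt.le).2 hdvd).symm)).1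
  have hval := s.card_primeFactorsOneMod_add_le hq'
  have hodd := s.odd_of_mem_excessPrimes hq
  rw [padicValNat.pow_sub_pow hodd s.lt hdvd hqa s.n_pos.ne',
    padicValNat.pow_sub_pow hodd s.lt hdvd hqa (Nat.add_pos_left s.n_pos k).ne'] at hval
  have hcard := (s.primeFactorsOneMod_nonempty hq).card_pos
  have hlt := (mem_excessPrimes.1 hq).2
  split_ifs at hval <;> omega

/- Distinct sets `S` of excess primes containing `q` give distinct primitive prime divisors, one
for each exponent `∏ S`, all congruent to `1` modulo `q`. -/
lemma two_pow_card_excessPrimes_sub_one_le (s : ReducedSolution D a b z n k N)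
    (hq : q ∈ excessPrimes (n + k) n) :
    2 ^ (#(excessPrimes (n + k) n) - 1) ≤ #(primeFactorsOneMod q N) := by
  set Q := excessPrimes (n + k) n
  have hex : ∀ S ∈ (Q.erase q).powerset, ∃ p ∈ primeFactorsOneMod q N,
      IsPrimitivePrimeDivisor p a b (∏ r ∈ insert q S, r) := fun S hS ↦ by
    have hsub : insert q S ⊆ Q :=
      insert_subset hq ((mem_powerset.1 hS).trans (erase_subset q Q))
    have hqdvd : q ∣ ∏ r ∈ insert q S, r := dvd_prod_of_mem _ (mem_insert_self q S)
    have hodd : Odd (∏ r ∈ insert q S, r) := prod_induction _ Odd (fun _ _ ↦ Odd.mul) odd_one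
      fun r hr ↦ s.odd_of_mem_excessPrimes (hsub hr)
    have hdvd : ∏ r ∈ insert q S, r ∣ n + k :=
      prod_primes_dvd _ (fun r hr ↦ (prime_of_mem_excessPrimes (hsub hr)).prime)
        fun r hr ↦ dvd_of_mem_excessPrimes (hsub hr)
    have hlt := (prime_of_mem_excessPrimes hq).one_lt.trans_le (Nat.le_of_dvd hodd.pos hqdvd)
    obtain ⟨p, hp, hprim⟩ := s.exists_isPrimitivePrimeDivisor_mem hlt hodd hdvd
    rw [mem_primeFactorsOneMod] at hp
    exact ⟨p, mem_primeFactorsOneMod.2 ⟨hp.1, hqdvd.trans hp.2⟩, hprim⟩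
  choose! f hf hprim using hex
  have hinj : Set.InjOn f ((Q.erase q).powerset : Set (Finset ℕ)) := fun S hS T hT hST ↦ by
    rw [coe_powerset, Set.mem_preimage, Set.mem_powerset_iff, coe_subset] at hS hT
    have hrecover {V : Finset ℕ} (hV : V ⊆ Q.erase q) :
        (∏ r ∈ insert q V, r).primeFactors.erase q = V := by
      rw [Nat.primeFactors_prod fun r hr ↦ prime_of_mem_excessPrimes
        (insert_subset hq (hV.trans (erase_subset q Q)) hr),
        erase_insert fun h ↦ notMem_erase q Q (hV h)]
    have hprod := (hprim S (mem_powerset.2 hS)).eq_of_eq (hST ▸ hprim T (mem_powerset.2 hT))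
    rw [← hrecover hS, ← hrecover hT, hprod]
  rw [← card_erase_of_mem hq, ← card_powerset]
  exact card_le_card_of_injOn f hf hinj

lemma pow_card_primeFactorsOneMod_sub_one_lt (s : ReducedSolution D a b z n k N)
    (hq : q ∈ excessPrimes (n + k) n) :
    q ^ (#(primeFactorsOneMod q N) - 1) < k * a ^ ((q - 1) / 2) := by
  have hq' := prime_of_mem_excessPrimes hq
  obtain ⟨ha, hb⟩ := s.odd_and_odd
  have hval := s.card_primeFactorsOneMod_add_le hq'
  calc q ^ (#(primeFactorsOneMod q N) - 1) ≤ q ^ padicValNat q (a ^ n - b ^ n) :=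
        Nat.pow_le_pow_right hq'.pos (by split_ifs at hval <;> omega)
    _ < q ^ padicValNat q n * a ^ ((q - 1) / 2) :=
        pow_padicValNat_pow_sub_pow_lt hq' (s.odd_of_mem_excessPrimes hq) s.coprime ha hb s.lt
          s.n_pos.ne'
    _ ≤ k * a ^ ((q - 1) / 2) := Nat.mul_le_mul_right _ <|
        Nat.le_of_dvd s.k_pos (pow_padicValNat_dvd_of_mem_excessPrimes hq)

end PrimitivePrimes

section BadPrimes

lemma badProduct_pos (s : ReducedSolution D a b z n k N) : 0 < z * D * powQuot a b k :=
  Nat.mul_pos (Nat.mul_pos s.z_pos s.D_pos) (powQuot_pos s.a_pos s.k_pos)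

lemma badProduct_lt (s : ReducedSolution D a b z n k N) : z * D * powQuot a b k < D ^ 2 * a ^ k :=
  calc z * D * powQuot a b k ≤ D * (a - b) * D * powQuot a b k := by
        gcongr
        exact s.z_le
    _ = D ^ 2 * (a ^ k - b ^ k) := by
        rw [← sub_mul_powQuot s.lt.le]
        ring
    _ < D ^ 2 * a ^ k := Nat.mul_lt_mul_of_pos_left
        (Nat.sub_lt (pow_pos s.a_pos k) (pow_pos s.b_pos k)) (pow_pos s.D_pos 2)

lemma dvd_badProduct (s : ReducedSolution D a b z n k N) (hp : p ∈ N.primeFactors)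
    (h : ∀ q ∈ excessPrimes (n + k) n, ¬ q ∣ p - 1) : p ∣ z * D * powQuot a b k := by
  have hp' := Nat.prime_of_mem_primeFactors hp
  have hmk : n + k ≠ 0 := (Nat.add_pos_left s.n_pos k).ne'
  have hpN := Nat.dvd_of_mem_primeFactors hp
  rw [s.N_eq, powQuot_mul_mul, hp'.dvd_mul, hp'.dvd_mul] at hpN
  rcases hpN with hz | hD | hquot
  · exact (hz.mul_right _).mul_right _
  · exact ((hp'.dvd_of_dvd_pow hD).mul_left _).mul_right _
  refine Dvd.dvd.mul_left ?_ _
  have hmod {e : ℕ} : a ^ e ≡ b ^ e [MOD p] ↔ p ∣ (a - b) * powQuot a b e := by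
    rw [sub_mul_powQuot s.lt.le, Nat.ModEq.comm,
      Nat.modEq_iff_dvd' (Nat.pow_le_pow_left s.lt.le e)]
  have hpow := hmod.2 (hquot.mul_left (a - b))
  obtain ⟨ha, hb⟩ := not_dvd_of_pow_modEq_pow s.coprime hp' hmk hpow
  by_cases hab : p ∣ a - b
  · rw [prime_dvd_powQuot_iff hp' s.lt.le hab hb] at hquot ⊢
    refine dvd_of_dvd_add_of_forall_excessPrimes_not_dvd s.n_pos.ne' hquot fun q hq hqp ↦ ?_
    obtain rfl := (Nat.prime_dvd_prime_iff_eq (prime_of_mem_excessPrimes hq) hp').1 hqp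
    exact s.not_dvd_sub_of_mem_excessPrimes hq hab
  · obtain ⟨o, ho, hperiod⟩ := exists_dvd_sub_one_forall_pow_modEq_pow_iff hp' ha hb
    have hok : o ∣ k := dvd_of_dvd_add_of_forall_excessPrimes_not_dvd s.n_pos.ne'
      ((hperiod _).1 hpow) fun q hq hqo ↦ h q hq (hqo.trans ho)
    exact (hp'.dvd_mul.1 (hmod.1 ((hperiod k).2 hok))).resolve_left hab

end BadPrimes

section LogBound

lemma sum_primeFactorsOneMod_le (s : ReducedSolution D a b z n k N)
    (hq : q ∈ excessPrimes (n + k) n) :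
    ∑ p ∈ primeFactorsOneMod q N, Real.log ((p : ℝ) / ((p : ℝ) - 1)) ≤
      3 / (4 * q) * Real.log (#(primeFactorsOneMod q N) + 1) := by
  have hq3 := s.three_le_of_mem_excessPrimes hq
  have hone {p : ℕ} (hp : p ∈ primeFactorsOneMod q N) : 1 < p :=
    one_lt_of_mem_primeFactors (mem_primeFactorsOneMod.1 hp).1
  have hdvd : ∀ p ∈ primeFactorsOneMod q N, 2 * q ∣ p - 1 := fun p hp ↦ by
    have hqp := (mem_primeFactorsOneMod.1 hp).2
    have hle := Nat.le_of_dvd (Nat.sub_pos_of_lt (hone hp)) hqp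
    have hodd := (Nat.prime_of_mem_primeFactors (mem_primeFactorsOneMod.1 hp).1).odd_of_ne_two
      (by omega)
    exact (Nat.coprime_two_left.2 (s.odd_of_mem_excessPrimes hq)).mul_dvd_of_dvd_of_dvd
      (Nat.Odd.sub_odd hodd odd_one).two_dvd hqp
  have hsum := sum_log_div_sub_one_le_of_dvd (by omega) (fun p hp ↦ hone hp) hdvd
  rwa [Nat.cast_mul, Nat.cast_two, ← mul_assoc, show (2 : ℝ) * 2 = 4 by norm_num] at hsum

lemma exists_factorial_lt_and_log_lt (s : ReducedSolution D a b z n k N) :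
    ∃ g : ℕ, 0 < g ∧ g.factorial < D ^ 2 * a ^ k ∧
      Real.log ((D * a) ^ k : ℕ) < Real.log g + ∑ q ∈ excessPrimes (n + k) n,
        3 / (4 * q) * Real.log (#(primeFactorsOneMod q N) + 1) := by
  set W := z * D * powQuot a b k
  have hW0 : W ≠ 0 := s.badProduct_pos.ne'
  refine ⟨#W.primeFactors + 1, Nat.succ_pos _,
    (factorial_card_primeFactors_succ_le hW0).trans_lt s.badProduct_lt, ?_⟩
  have hcover : ∀ p ∈ N.primeFactors, p ∈ W.primeFactors ∨
      ∃ q ∈ excessPrimes (n + k) n, p ∈ primeFactorsOneMod q N := fun p hp ↦ by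
    by_contra! hbad
    exact hbad.1 <| Nat.mem_primeFactors.2 ⟨Nat.prime_of_mem_primeFactors hp,
      s.dvd_badProduct hp fun q hq hqp ↦ hbad.2 q hq (mem_primeFactorsOneMod.2 ⟨hp, hqp⟩), hW0⟩
  calc Real.log ((D * a) ^ k : ℕ)
      < ∑ p ∈ N.primeFactors, Real.log ((p : ℝ) / ((p : ℝ) - 1)) := s.log_pow_lt_sum
    _ ≤ ∑ p ∈ W.primeFactors, Real.log ((p : ℝ) / ((p : ℝ) - 1)) +
          ∑ q ∈ excessPrimes (n + k) n,
            ∑ p ∈ primeFactorsOneMod q N, Real.log ((p : ℝ) / ((p : ℝ) - 1)) :=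
        sum_le_sum_add_sum_sum log_div_sub_one_nonneg hcover
    _ ≤ _ := by
        rw [Nat.cast_succ]
        gcongr with q hq
        · exact sum_log_div_sub_one_le fun p hp ↦ one_lt_of_mem_primeFactors hp
        · exact s.sum_primeFactorsOneMod_le hq

end LogBound

section Contradiction

lemma three_le (s : ReducedSolution D a b z n k N) : 3 ≤ a := by
  have := s.b_pos
  have := s.add_two_le
  omega

lemma card_primeFactorsOneMod_le (s : ReducedSolution D a b z n k N)
    (hq : q ∈ excessPrimes (n + k) n) :
    (#(primeFactorsOneMod q N) : ℝ) ≤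
      1 + (q - 1) / Real.log q * (Real.log ((D * a) ^ k : ℕ) / 2) := by
  have hq3 := s.three_le_of_mem_excessPrimes hq
  obtain ⟨h, hh⟩ := s.odd_of_mem_excessPrimes hq
  have hk : k * a ≤ (D * a) ^ k :=
    calc k * a = a * k := Nat.mul_comm k a
      _ ≤ a ^ k := Nat.mul_le_pow (by have := s.three_le; omega) k
      _ ≤ (D * a) ^ k := Nat.pow_le_pow_left (Nat.le_mul_of_pos_left a s.D_pos) k
  have hnat : q ^ (#(primeFactorsOneMod q N) - 1) ≤ ((D * a) ^ k) ^ h :=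
    calc q ^ (#(primeFactorsOneMod q N) - 1) ≤ k * a ^ h := by
          rw [show h = (q - 1) / 2 by omega]
          exact (s.pow_card_primeFactorsOneMod_sub_one_lt hq).le
      _ ≤ k ^ h * a ^ h := Nat.mul_le_mul_right _ (Nat.le_self_pow (by omega) k)
      _ = (k * a) ^ h := (mul_pow k a h).symm
      _ ≤ ((D * a) ^ k) ^ h := Nat.pow_le_pow_left hk h
  have hlog : Real.log ((q : ℝ) ^ (#(primeFactorsOneMod q N) - 1)) ≤
      Real.log ((((D * a) ^ k : ℕ) : ℝ) ^ h) :=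
    Real.log_le_log (pow_pos (by positivity) _) (mod_cast hnat)
  rw [Real.log_pow, Real.log_pow, Nat.cast_pred (s.primeFactorsOneMod_nonempty hq).card_pos,
    ← le_div_iff₀ (Real.log_pos (mod_cast (by omega : 1 < q)))] at hlog
  have hhalf : (h : ℝ) = (q - 1) / 2 := by
    rw [hh]
    push_cast
    ring
  calc (#(primeFactorsOneMod q N) : ℝ)
      ≤ 1 + h * Real.log ((D * a) ^ k : ℕ) / Real.log q := by linarith
    _ = 1 + (q - 1) / Real.log q * (Real.log ((D * a) ^ k : ℕ) / 2) := by
        rw [hhalf]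
        ring

lemma sum_excessPrimes_le (s : ReducedSolution D a b z n k N) {r : ℕ}
    (hr : r ∈ excessPrimes (n + k) n) (hmin : ∀ q ∈ excessPrimes (n + k) n, r ≤ q) :
    ∑ q ∈ excessPrimes (n + k) n, 3 / (4 * q) * Real.log (#(primeFactorsOneMod q N) + 1) ≤
      (0.66 + 0.99 * ((r - 1) / Real.log r * (Real.log ((D * a) ^ k : ℕ) / 2))) / r := by
  have hr3 := s.three_le_of_mem_excessPrimes hr
  refine sum_mul_log_succ_le (R := fun q ↦ #(primeFactorsOneMod q N)) (by omega) hr hmin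
    (fun q hq ↦ (s.card_primeFactorsOneMod_le hq).trans ?_)
    (s.two_pow_card_excessPrimes_sub_one_le hr)
  rw [← mul_assoc]
  gcongr
  exact sub_one_div_log_le (mod_cast (by omega : 1 < r)) (mod_cast hmin q hq)

lemma sum_excessPrimes_le_of_five_le (s : ReducedSolution D a b z n k N)
    (h : ∀ q ∈ excessPrimes (n + k) n, 5 ≤ q) :
    ∑ q ∈ excessPrimes (n + k) n, 3 / (4 * q) * Real.log (#(primeFactorsOneMod q N) + 1) ≤
      0.132 + 0.2466 * Real.log ((D * a) ^ k : ℕ) := by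
  obtain ⟨r, hr, hmin⟩ := exists_min_image (excessPrimes (n + k) n) id
    (excessPrimes_nonempty s.n_pos.ne' (Nat.lt_add_of_pos_right s.k_pos))
  have hr5 : (5 : ℝ) ≤ r := mod_cast h r hr
  have hL : 0 ≤ Real.log ((D * a) ^ k : ℕ) := Real.log_natCast_nonneg _
  have hfive : ((r : ℝ) - 1) / Real.log r ≤ r * 0.498 :=
    calc ((r : ℝ) - 1) / Real.log r ≤ r / 5 * ((5 - 1) / Real.log 5) :=
          sub_one_div_log_le (by norm_num) hr5
      _ ≤ r / 5 * (5 * 0.498) := by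
          gcongr
          rw [div_le_iff₀ (by positivity)]
          linarith [Real.log_five_gt_d9]
      _ = r * 0.498 := by ring
  calc _ ≤ (0.66 + 0.99 * ((r - 1) / Real.log r * (Real.log ((D * a) ^ k : ℕ) / 2))) / r :=
        s.sum_excessPrimes_le hr hmin
    _ ≤ (0.132 * r + 0.99 * (r * 0.498 * (Real.log ((D * a) ^ k : ℕ) / 2))) / r := by
        gcongr
        linarith
    _ = 0.132 + 0.24651 * Real.log ((D * a) ^ k : ℕ) := by
        field_simp
        ring
    _ ≤ 0.132 + 0.2466 * Real.log ((D * a) ^ k : ℕ) := by linarith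

lemma sum_excessPrimes_le_of_three_mem (s : ReducedSolution D a b z n k N)
    (h3 : 3 ∈ excessPrimes (n + k) n) :
    ∑ q ∈ excessPrimes (n + k) n, 3 / (4 * q) * Real.log (#(primeFactorsOneMod q N) + 1) ≤
      0.22 + 0.301 * Real.log ((D * a) ^ k : ℕ) := by
  have hL : 0 ≤ Real.log ((D * a) ^ k : ℕ) := Real.log_natCast_nonneg _
  have hthree : (3 - 1) / Real.log 3 ≤ 1.8206 := by
    rw [div_le_iff₀ (by positivity)]
    linarith [Real.log_three_gt_d9]
  have hsum := s.sum_excessPrimes_le h3 fun q hq ↦ s.three_le_of_mem_excessPrimes hq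
  rw [Nat.cast_ofNat] at hsum
  calc _ ≤ (0.66 + 0.99 * ((3 - 1) / Real.log 3 * (Real.log ((D * a) ^ k : ℕ) / 2))) / 3 := hsum
    _ ≤ (0.66 + 0.99 * (1.8206 * (Real.log ((D * a) ^ k : ℕ) / 2))) / 3 := by gcongr
    _ ≤ 0.22 + 0.301 * Real.log ((D * a) ^ k : ℕ) := by linarith

lemma sum_excessPrimes_eq_of_card_eq_one (s : ReducedSolution D a b z n k N)
    (hq : q ∈ excessPrimes (n + k) n) (hcard : #(primeFactorsOneMod q N) = 1) :
    ∑ q ∈ excessPrimes (n + k) n, 3 / (4 * q) * Real.log (#(primeFactorsOneMod q N) + 1) =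
      3 / (4 * q) * Real.log 2 := by
  have hpow := s.two_pow_card_excessPrimes_sub_one_le hq
  have hlt := Nat.lt_two_pow_self (n := #(excessPrimes (n + k) n) - 1)
  obtain ⟨r, hr⟩ := card_eq_one.1 (le_antisymm (by omega) (card_pos.2 ⟨q, hq⟩))
  rw [hr, mem_singleton] at hq
  rw [hr, sum_singleton, ← hq, hcard, Nat.cast_one, one_add_one_eq_two]

lemma five_le_pow (s : ReducedSolution D a b z n k N) (h3 : 3 ∈ excessPrimes (n + k) n)
    (hcard : 2 ≤ #(primeFactorsOneMod 3 N)) : 5 ≤ a ^ k := by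
  obtain ⟨j, hj⟩ := s.odd_and_odd.1.pow (n := k)
  have hlt : 3 < a ^ k :=
    calc 3 ≤ 3 ^ (#(primeFactorsOneMod 3 N) - 1) := Nat.le_self_pow (by omega) 3
      _ < k * a := by simpa using s.pow_card_primeFactorsOneMod_sub_one_lt h3
      _ = a * k := Nat.mul_comm k a
      _ ≤ a ^ k := Nat.mul_le_pow (by have := s.three_le; omega) k
  omega

lemma log_mul_pow_le (s : ReducedSolution D a b z n k N) :
    Real.log (D * a ^ k : ℕ) ≤ Real.log ((D * a) ^ k : ℕ) := by
  refine Real.log_le_log (mod_cast Nat.mul_pos s.D_pos (pow_pos s.a_pos k)) ?_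
  rw [mul_pow]
  exact_mod_cast Nat.mul_le_mul_right _ (Nat.le_self_pow s.k_pos.ne' D)

protected theorem false (s : ReducedSolution D a b z n k N) : False := by
  obtain ⟨g, hg, hfactorial, hlog⟩ := s.exists_factorial_lt_and_log_lt
  have hle := s.log_mul_pow_le
  have hak : 3 ≤ a ^ k := s.three_le.trans (Nat.le_self_pow s.k_pos.ne' a)
  have hbound := log_add_le_of_factorial_lt_of_three_le s.D_pos hg hak hfactorial
  by_cases h3 : 3 ∈ excessPrimes (n + k) n
  · rcases le_or_gt (#(primeFactorsOneMod 3 N)) 1 with hcard | hcard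
    · rw [s.sum_excessPrimes_eq_of_card_eq_one h3
        (le_antisymm hcard (s.primeFactorsOneMod_nonempty h3).card_pos)] at hlog
      have hL : Real.log 3 ≤ Real.log ((D * a) ^ k : ℕ) := by
        refine le_trans (Real.log_le_log three_pos ?_) hle
        exact_mod_cast hak.trans (Nat.le_mul_of_pos_left _ s.D_pos)
      rw [Nat.cast_ofNat] at hlog
      linarith [Real.log_two_lt_d9, Real.log_three_gt_d9]
    · have hbound' := log_add_le_of_factorial_lt_of_five_le s.D_pos hg (s.five_le_pow h3 hcard)
        hfactorial
      linarith [s.sum_excessPrimes_le_of_three_mem h3]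
  · have h5 : ∀ q ∈ excessPrimes (n + k) n, 5 ≤ q := fun q hq ↦ by
      obtain ⟨j, hj⟩ := s.odd_of_mem_excessPrimes hq
      have hq3 := s.three_le_of_mem_excessPrimes hq
      have hne : q ≠ 3 := by
        rintro rfl
        exact h3 hq
      omega
    linarith [s.sum_excessPrimes_le_of_five_le h5]

end Contradiction

end ReducedSolution

lemma powQuot_eq_div {x y : ℕ} (hyx : y < x) (e : ℕ) :
    powQuot x y e = (x ^ e - y ^ e) / (x - y) :=
  Nat.eq_div_of_mul_eq_right (Nat.sub_pos_of_lt hyx).ne' (sub_mul_powQuot hyx.le e)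

lemma totient_mul_powQuot_ne {x y z m n : ℕ} (hy : 0 < y) (hyx : y < x) (hz : 0 < z)
    (hzxy : z ≤ x - y) (hn : 0 < n) (hnm : n < m) :
    (z * powQuot x y m).totient ≠ z * powQuot x y n := fun heq ↦ by
  obtain ⟨D, a, b, hD, hcoprime, rfl, rfl⟩ :
      ∃ D a b : ℕ, 0 < D ∧ a.Coprime b ∧ x = D * a ∧ y = D * b := by
    obtain ⟨a, b, hcoprime, hxa, hyb⟩ := Nat.exists_coprime x y
    exact ⟨x.gcd y, a, b, Nat.gcd_pos_of_pos_right x hy, hcoprime, by rwa [mul_comm],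
      by rwa [mul_comm]⟩
  obtain ⟨k, hk, rfl⟩ := exists_pos_add_of_lt' hnm
  have s : ReducedSolution D a b z n k (z * powQuot (D * a) (D * b) (n + k)) :=
    { coprime := hcoprime
      b_pos := Nat.pos_of_mul_pos_left hy
      lt := Nat.lt_of_mul_lt_mul_left hyx
      D_pos := hD
      z_pos := hz
      z_le := by rwa [Nat.mul_sub]
      n_pos := hn
      k_pos := hk
      N_eq := rfl
      totient_eq := heq }
  exact s.false

lemma eq_one_of_totient_eq_self {n : ℕ} (hn : 0 < n) (h : n.totient = n) : n = 1 := by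
  by_contra! hne
  exact (Nat.totient_lt n (by omega)).ne h

theorem phi_eq_general (x y z m n : ℕ) (hx : 0 < x) (hy : 0 < y) (hz : 0 < z)
    (hm : 0 < m) (hn : 0 < n) (hxy : y < x) (hzxy : z ≤ x - y)
    (heq : Nat.totient (z * ((x ^ m - y ^ m) / (x - y))) =
      z * ((x ^ n - y ^ n) / (x - y))) :
    z = 1 ∧ m = 1 ∧ n = 1 := by
  rw [← powQuot_eq_div hxy, ← powQuot_eq_div hxy] at heq
  have hmono := powQuot_strictMono hx hy
  have hle : n ≤ m := hmono.le_iff_le.1 <| Nat.le_of_mul_le_mul_left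
    (heq ▸ Nat.totient_le (z * powQuot x y m)) hz
  obtain rfl : n = m := hle.eq_or_lt.resolve_right fun hnm ↦
    totient_mul_powQuot_ne hy hxy hz hzxy hn hnm heq
  obtain ⟨hz1, hquot⟩ := mul_eq_one.1 <|
    eq_one_of_totient_eq_self (Nat.mul_pos hz (powQuot_pos hx hm)) heq
  have hn1 : n = 1 := hmono.injective (hquot.trans (powQuot_one x y).symm)
  exact ⟨hz1, hn1, hn1⟩
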